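/- In a Euclidean conformal triangle datum, at every point of U and for all distinct i, j ∈ {1,2,3} with k the remaining index: ∂γ_i/∂f_j = h_ij/ℓ_ij and ∂γ_i/∂f_i = −h_ij/ℓ_ij − h_ik/ℓ_ik. -/

import Mathlib

noncomputable section

/-- Partial derivative of `F` in the `k`-th coordinate direction at `x`. -/
def pd (k : Fin 3) (F : (Fin 3 → ℝ) → ℝ) (x : Fin 3 → ℝ) : ℝ :=
  fderiv ℝ F x (Pi.single k 1)

/-- The edge length `ℓ_ij = d_ij + d_ji` determined by the partial edge lengths. -/
def len (d : Fin 3 → Fin 3 → (Fin 3 → ℝ) → ℝ) (i j : Fin 3) (x : Fin 3 → ℝ) : ℝ :=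
  d i j x + d j i x

/-- The index complementary to `i` and `j` in `{0,1,2}` (for `i ≠ j`). -/
def other (i j : Fin 3) : Fin 3 := -(i + j)

/-- The angle `γ_i` of the Euclidean triangle with side lengths `ℓ_ab`, defined by the
Euclidean law of cosines `cos γ_i = (ℓ_ij² + ℓ_ik² − ℓ_jk²)/(2 ℓ_ij ℓ_ik)`. -/
def eGamma (d : Fin 3 → Fin 3 → (Fin 3 → ℝ) → ℝ) (i : Fin 3) (x : Fin 3 → ℝ) : ℝ :=
  Real.arccos ((len d i (i+1) x ^ 2 + len d i (i+2) x ^ 2 - len d (i+1) (i+2) x ^ 2) /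
    (2 * len d i (i+1) x * len d i (i+2) x))

/-- The signed height `h_ij = (d_ik − d_ij cos γ_i)/sin γ_i` from the edge center of edge
`{i,j}` to the dual center of the triangle. -/
def eHeight (d : Fin 3 → Fin 3 → (Fin 3 → ℝ) → ℝ) (i j : Fin 3) (x : Fin 3 → ℝ) : ℝ :=
  (d i (other i j) x - d i j x * Real.cos (eGamma d i x)) / Real.sin (eGamma d i x)

/-!
Differentiating the law of cosines gives, for a triangle with sides `a`, `b`, `c` and angle `γ`
opposite to `c`, the formula `a b sin γ dγ = c dc - (a - b cos γ) da - (b - a cos γ) db`.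
Inserting `∂ℓ_ij/∂f_i = d_ij` yields `∂γ_i/∂f_i` at once. For `∂γ_i/∂f_j` the compatibility
condition is needed in the form `ℓ_ij ℓ_ik cos γ_i = ℓ_ik d_ik + ℓ_ij d_ji - ℓ_jk d_jk`.
-/

/-- The strict triangle inequalities: `a`, `b`, `c` are the side lengths of a nondegenerate
Euclidean triangle. Positivity of the sides is a consequence and not part of the definition. -/
structure IsTriangle (a b c : ℝ) : Prop where
  first_lt : a < b + c
  second_lt : b < a + c
  third_lt : c < a + b

/-- The angle between the sides `a` and `b` of a Euclidean triangle whose third side is `c`,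
as given by the law of cosines. -/
def sideAngle (a b c : ℝ) : ℝ :=
  Real.arccos ((a ^ 2 + b ^ 2 - c ^ 2) / (2 * a * b))

theorem sideAngle_comm (a b c : ℝ) : sideAngle a b c = sideAngle b a c := by
  unfold sideAngle
  ring_nf

namespace IsTriangle

variable {a b c : ℝ}

theorem first_pos (h : IsTriangle a b c) : 0 < a := by
  linarith [h.second_lt, h.third_lt]

theorem second_pos (h : IsTriangle a b c) : 0 < b := by
  linarith [h.first_lt, h.third_lt]

theorem cos_ratio_mem_Ioo (h : IsTriangle a b c) :
    (a ^ 2 + b ^ 2 - c ^ 2) / (2 * a * b) ∈ Set.Ioo (-1 : ℝ) 1 := by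
  have hab : 0 < 2 * a * b := mul_pos (mul_pos two_pos h.first_pos) h.second_pos
  have hsub : (a - b) ^ 2 < c ^ 2 :=
    sq_lt_sq' (by linarith [h.second_lt]) (by linarith [h.first_lt])
  have hadd : c ^ 2 < (a + b) ^ 2 :=
    sq_lt_sq' (by linarith [h.first_lt, h.first_pos]) h.third_lt
  rw [Set.mem_Ioo, lt_div_iff₀ hab, div_lt_one hab]
  constructor <;> linarith

theorem cos_sideAngle (h : IsTriangle a b c) :
    Real.cos (sideAngle a b c) = (a ^ 2 + b ^ 2 - c ^ 2) / (2 * a * b) :=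
  Real.cos_arccos h.cos_ratio_mem_Ioo.1.le h.cos_ratio_mem_Ioo.2.le

theorem law_of_cosines (h : IsTriangle a b c) :
    c ^ 2 = a ^ 2 + b ^ 2 - 2 * a * b * Real.cos (sideAngle a b c) := by
  have ha := h.first_pos.ne'
  have hb := h.second_pos.ne'
  rw [h.cos_sideAngle]
  field_simp
  ring

theorem sin_sideAngle_pos (h : IsTriangle a b c) : 0 < Real.sin (sideAngle a b c) := by
  rw [sideAngle, Real.sin_arccos, Real.sqrt_pos, sub_pos, sq_lt_one_iff_abs_lt_one]
  exact abs_lt.mpr h.cos_ratio_mem_Ioo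

end IsTriangle

theorem hasFDerivAt_sideAngle {E : Type*} [NormedAddCommGroup E] [NormedSpace ℝ E]
    {a b c : E → ℝ} {a' b' c' : E →L[ℝ] ℝ} {x : E} {γ : ℝ}
    (ha : HasFDerivAt a a' x) (hb : HasFDerivAt b b' x) (hc : HasFDerivAt c c' x)
    (h : IsTriangle (a x) (b x) (c x)) (hγ : sideAngle (a x) (b x) (c x) = γ) :
    HasFDerivAt (fun y => sideAngle (a y) (b y) (c y))
      ((a x * b x * Real.sin γ)⁻¹ • (c x • c' - (a x - b x * Real.cos γ) • a'
        - (b x - a x * Real.cos γ) • b')) x := by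
  subst hγ
  have ha₀ := h.first_pos.ne'
  have hb₀ := h.second_pos.ne'
  have hsin := h.sin_sideAngle_pos.ne'
  have harccos := Real.hasDerivAt_arccos h.cos_ratio_mem_Ioo.1.ne' h.cos_ratio_mem_Ioo.2.ne
  rw [← Real.sin_arccos, ← sideAngle] at harccos
  have hnum := ((ha.pow 2).add (hb.pow 2)).sub (hc.pow 2)
  have hden := mul_ne_zero (mul_ne_zero two_ne_zero ha₀) hb₀
  have hden_inv := (hasDerivAt_inv hden).comp_hasFDerivAt x ((ha.const_mul 2).mul hb)
  refine (harccos.comp_hasFDerivAt x (hnum.mul hden_inv)).congr_fderiv ?_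
  ext v
  rw [h.cos_sideAngle]
  simp only [Pi.sub_apply, Pi.add_apply, Pi.mul_apply, Function.comp_apply, add_apply, sub_apply,
    smul_apply, smul_eq_mul, nsmul_eq_mul, Nat.add_one_sub_one, Nat.cast_ofNat, pow_one]
  field_simp
  ring

section Indices

variable {i j k : Fin 3}

theorem other_ne_left (hij : i ≠ j) : other i j ≠ i := by
  decide +revert

theorem other_ne_right (hij : i ≠ j) : other i j ≠ j := by
  decide +revert

theorem other_eq_of_ne (hij : i ≠ j) (hjk : j ≠ k) (hik : i ≠ k) : other i j = k := by
  decide +revert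

theorem eq_add_one_and_eq_add_two_or_swap (hij : i ≠ j) (hjk : j ≠ k) (hik : i ≠ k) :
    (j = i + 1 ∧ k = i + 2) ∨ (k = i + 1 ∧ j = i + 2) := by
  decide +revert

end Indices

section ConformalTriangle

variable {d : Fin 3 → Fin 3 → (Fin 3 → ℝ) → ℝ} {x : Fin 3 → ℝ} {i j k : Fin 3}

theorem len_comm (d : Fin 3 → Fin 3 → (Fin 3 → ℝ) → ℝ) (i j : Fin 3) :
    len d i j = len d j i :=
  funext fun _ => add_comm _ _

theorem pd_len (hij : DifferentiableAt ℝ (d i j) x) (hji : DifferentiableAt ℝ (d j i) x)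
    (k : Fin 3) : pd k (len d i j) x = pd k (d i j) x + pd k (d j i) x :=
  congrArg (· (Pi.single k 1)) (fderiv_add hij hji)

theorem isTriangle_len (hij : i ≠ j) (hjk : j ≠ k) (hik : i ≠ k)
    (htri : ∀ i j k : Fin 3, i ≠ j → j ≠ k → i ≠ k → len d i j x < len d i k x + len d k j x) :
    IsTriangle (len d i j x) (len d i k x) (len d j k x) where
  first_lt := by simpa only [len_comm d k j] using htri i j k hij hjk hik
  second_lt := htri i k j hik hjk.symm hij
  third_lt := by simpa only [len_comm d j i] using htri j k i hjk hik.symm hij.symm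

theorem eGamma_eq_sideAngle (hij : i ≠ j) (hjk : j ≠ k) (hik : i ≠ k) :
    eGamma d i = fun y => sideAngle (len d i j y) (len d i k y) (len d j k y) := by
  funext y
  obtain ⟨rfl, rfl⟩ | ⟨rfl, rfl⟩ := eq_add_one_and_eq_add_two_or_swap hij hjk hik
  · rfl
  · rw [sideAngle_comm, len_comm d (i + 2) (i + 1)]
    rfl

theorem pd_eGamma (hij : i ≠ j) (hjk : j ≠ k) (hik : i ≠ k) (m : Fin 3)
    (hdiff : ∀ p q : Fin 3, p ≠ q → DifferentiableAt ℝ (len d p q) x)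
    (hT : IsTriangle (len d i j x) (len d i k x) (len d j k x)) :
    pd m (eGamma d i) x =
      (len d j k x * pd m (len d j k) x
        - (len d i j x - len d i k x * Real.cos (eGamma d i x)) * pd m (len d i j) x
        - (len d i k x - len d i j x * Real.cos (eGamma d i x)) * pd m (len d i k) x) /
      (len d i j x * len d i k x * Real.sin (eGamma d i x)) := by
  have hγ := eGamma_eq_sideAngle (d := d) hij hjk hik
  have hderiv := hasFDerivAt_sideAngle (hdiff i j hij).hasFDerivAt (hdiff i k hik).hasFDerivAt
    (hdiff j k hjk).hasFDerivAt hT (congrFun hγ x).symm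
  rw [← hγ] at hderiv
  rw [div_eq_inv_mul]
  exact congrArg (· (Pi.single m 1)) hderiv.fderiv

theorem sin_eGamma_ne_zero (hij : i ≠ j) (hjk : j ≠ k) (hik : i ≠ k)
    (hT : IsTriangle (len d i j x) (len d i k x) (len d j k x)) :
    Real.sin (eGamma d i x) ≠ 0 := by
  rw [eGamma_eq_sideAngle hij hjk hik]
  exact hT.sin_sideAngle_pos.ne'

theorem compat_of_ne (hij : i ≠ j) (hjk : j ≠ k) (hik : i ≠ k)
    (hcompat : d 0 1 x ^ 2 + d 1 2 x ^ 2 + d 2 0 x ^ 2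
      = d 1 0 x ^ 2 + d 2 1 x ^ 2 + d 0 2 x ^ 2) :
    d i j x ^ 2 + d j k x ^ 2 + d k i x ^ 2 = d j i x ^ 2 + d k j x ^ 2 + d i k x ^ 2 := by
  obtain ⟨rfl, rfl⟩ | ⟨rfl, rfl⟩ := eq_add_one_and_eq_add_two_or_swap hij hjk hik <;>
    fin_cases i <;>
    simp only [Fin.zero_eta, Fin.mk_one, Fin.reduceFinMk, Fin.isValue, zero_add, Fin.reduceAdd] <;>
    linarith

theorem len_mul_len_mul_cos_eGamma (hij : i ≠ j) (hjk : j ≠ k) (hik : i ≠ k)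
    (hT : IsTriangle (len d i j x) (len d i k x) (len d j k x))
    (hcompat : d i j x ^ 2 + d j k x ^ 2 + d k i x ^ 2
      = d j i x ^ 2 + d k j x ^ 2 + d i k x ^ 2) :
    len d i j x * len d i k x * Real.cos (eGamma d i x)
      = len d i k x * d i k x + len d i j x * d j i x - len d j k x * d j k x := by
  have hcos := hT.law_of_cosines
  rw [← congrFun (eGamma_eq_sideAngle hij hjk hik) x] at hcos
  simp only [len] at hcos ⊢
  linear_combination (hcos + hcompat) / 2

theorem pd_eGamma_of_ne (hij : i ≠ j) (hjk : j ≠ k) (hik : i ≠ k)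
    (hdiff : ∀ p q : Fin 3, p ≠ q → DifferentiableAt ℝ (len d p q) x)
    (hdep : pd j (len d i k) x = 0)
    (hT : IsTriangle (len d i j x) (len d i k x) (len d j k x))
    (hcompat : d i j x ^ 2 + d j k x ^ 2 + d k i x ^ 2
      = d j i x ^ 2 + d k j x ^ 2 + d i k x ^ 2)
    (hconf : ∀ p : Fin 3, j ≠ p → pd j (len d j p) x = d j p x) :
    pd j (eGamma d i) x = eHeight d i j x / len d i j x := by
  have hij₀ := hT.first_pos.ne'
  have hik₀ := hT.second_pos.ne'
  have hsin := sin_eGamma_ne_zero hij hjk hik hT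
  have hcos := len_mul_len_mul_cos_eGamma hij hjk hik hT hcompat
  have hlen : len d i j x = d i j x + d j i x := rfl
  have hpd : pd j (len d i j) x = d j i x := len_comm d j i ▸ hconf i hij.symm
  rw [pd_eGamma hij hjk hik j hdiff hT, hpd, hdep, hconf k hjk, eHeight,
    other_eq_of_ne hij hjk hik]
  field_simp
  linear_combination hcos - len d i k x * Real.cos (eGamma d i x) * hlen

theorem pd_eGamma_self (hij : i ≠ j) (hjk : j ≠ k) (hik : i ≠ k)
    (hdiff : ∀ p q : Fin 3, p ≠ q → DifferentiableAt ℝ (len d p q) x)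
    (hdep : pd i (len d j k) x = 0)
    (hT : IsTriangle (len d i j x) (len d i k x) (len d j k x))
    (hconf : ∀ p : Fin 3, i ≠ p → pd i (len d i p) x = d i p x) :
    pd i (eGamma d i) x
      = -(eHeight d i j x / len d i j x) - eHeight d i k x / len d i k x := by
  have hij₀ := hT.first_pos.ne'
  have hik₀ := hT.second_pos.ne'
  have hsin := sin_eGamma_ne_zero hij hjk hik hT
  rw [pd_eGamma hij hjk hik i hdiff hT, hconf j hij, hconf k hik, hdep, eHeight, eHeight,
    other_eq_of_ne hij hjk hik, other_eq_of_ne hik hjk.symm hij]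
  field_simp
  ring

theorem euclidean_angle_variation_general
    (hdiff : ∀ i j : Fin 3, i ≠ j → DifferentiableAt ℝ (d i j) x)
    (hdep : ∀ i j k : Fin 3, i ≠ j → k ≠ i → k ≠ j → pd k (d i j) x = 0)
    (htri : ∀ i j k : Fin 3, i ≠ j → j ≠ k → i ≠ k → len d i j x < len d i k x + len d k j x)
    (hcompat : d 0 1 x ^ 2 + d 1 2 x ^ 2 + d 2 0 x ^ 2
      = d 1 0 x ^ 2 + d 2 1 x ^ 2 + d 0 2 x ^ 2)
    (hconf : ∀ i j : Fin 3, i ≠ j → pd i (len d i j) x = d i j x)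
    (hij : i ≠ j) :
    pd j (eGamma d i) x = eHeight d i j x / len d i j x ∧
    pd i (eGamma d i) x
      = -(eHeight d i j x / len d i j x)
        - eHeight d i (other i j) x / len d i (other i j) x := by
  have hik := (other_ne_left hij).symm
  have hjk := (other_ne_right hij).symm
  have hlen_diff (p q : Fin 3) (h : p ≠ q) : DifferentiableAt ℝ (len d p q) x :=
    (hdiff p q h).add (hdiff q p h.symm)
  have hlen_dep (p q r : Fin 3) (h : p ≠ q) (hp : r ≠ p) (hq : r ≠ q) :
      pd r (len d p q) x = 0 := by
    rw [pd_len (hdiff p q h) (hdiff q p h.symm), hdep p q r h hp hq, hdep q p r h.symm hq hp,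
      add_zero]
  have hT := isTriangle_len hij hjk hik htri
  exact ⟨pd_eGamma_of_ne hij hjk hik hlen_diff (hlen_dep _ _ _ hik hij.symm hjk) hT
      (compat_of_ne hij hjk hik hcompat) (hconf j),
    pd_eGamma_self hij hjk hik hlen_diff (hlen_dep _ _ _ hjk hij hik) hT (hconf i)⟩

end ConformalTriangle

/-- Theorem 2.3 (conformal variation of Euclidean angles):
`∂γ_i/∂f_j = h_ij/ℓ_ij` and `∂γ_i/∂f_i = −h_ij/ℓ_ij − h_ik/ℓ_ik`. -/
theorem euclidean_angle_variation
    (U : Set (Fin 3 → ℝ)) (hUopen : IsOpen U)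
    (d : Fin 3 → Fin 3 → (Fin 3 → ℝ) → ℝ)
    (hsmooth : ∀ i j : Fin 3, i ≠ j → ContDiffOn ℝ (⊤ : ℕ∞) (d i j) U)
    (hdep : ∀ i j k : Fin 3, i ≠ j → k ≠ i → k ≠ j → ∀ x ∈ U, pd k (d i j) x = 0)
    (hpos : ∀ i j : Fin 3, i ≠ j → ∀ x ∈ U, 0 < len d i j x)
    (htri : ∀ i j k : Fin 3, i ≠ j → j ≠ k → i ≠ k → ∀ x ∈ U,
      len d i j x < len d i k x + len d k j x)
    (hcompat : ∀ x ∈ U,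
      d 0 1 x ^ 2 + d 1 2 x ^ 2 + d 2 0 x ^ 2
        = d 1 0 x ^ 2 + d 2 1 x ^ 2 + d 0 2 x ^ 2)
    (hconf : ∀ i j : Fin 3, i ≠ j → ∀ x ∈ U, pd i (len d i j) x = d i j x)
    :
    ∀ x ∈ U, ∀ i j : Fin 3, i ≠ j →
      pd j (eGamma d i) x = eHeight d i j x / len d i j x ∧
      pd i (eGamma d i) x
        = -(eHeight d i j x / len d i j x)
          - eHeight d i (other i j) x / len d i (other i j) x := by
  intro x hx i j hij
  exact euclidean_angle_variation_general
    (fun p q h => ((hsmooth p q h).contDiffAt (hUopen.mem_nhds hx)).differentiableAt (by simp))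
    (fun p q r h hp hq => hdep p q r h hp hq x hx)
    (fun p q r h₁ h₂ h₃ => htri p q r h₁ h₂ h₃ x hx)
    (hcompat x hx) (fun p q h => hconf p q h x hx) hij
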